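/- arXiv:1205.5993 — 4 statements merged into one kernel-verified Lean document; each statement's English description precedes it below -/
import Mathlib

section
/- Let (X,d_X) be a finite metric space, let S ⊆ X, and let D ≥ 1. Suppose ρ_0 : S × S → [0,∞) is an ultrametric on S satisfying d_X(x,y) ≤ ρ_0(x,y) ≤ D d_X(x,y) for all x,y ∈ S. Then there exists an ultrametric ρ : X × X → [0,∞) such that: ρ(x,y) = ρ_0(x,y) for all x,y ∈ S; ρ(x,y) ≥ d_X(x,y)/3 for every x,y ∈ X; and ρ(x,y) ≤ 2D d_X(x,y) for every x ∈ X and y ∈ S. -/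
universe u

/-- `d` is a metric on `A`. -/
def IsMetricOn {A : Type*} (d : A → A → ℝ) : Prop :=
  (∀ x y, 0 ≤ d x y) ∧ (∀ x y, d x y = 0 ↔ x = y) ∧ (∀ x y, d x y = d y x) ∧
    ∀ x y z, d x z ≤ d x y + d y z

/-- `ρ` is an ultrametric on `A`. -/
def IsUltrametricOn {A : Type*} (ρ : A → A → ℝ) : Prop :=
  IsMetricOn ρ ∧ ∀ x y z, ρ x z ≤ max (ρ x y) (ρ y z)

/-- **Extension lemma for approximate ultrametrics (Mendel–Naor).** If `(X,d)` is a finite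
metric space, `S ⊆ X`, `D ≥ 1`, and `ρ₀` is an ultrametric on `S` with
`d(x,y) ≤ ρ₀(x,y) ≤ D d(x,y)` on `S`, then there is an ultrametric `ρ` on `X` extending `ρ₀`
with `ρ(x,y) ≥ d(x,y)/3` for all `x,y ∈ X` and `ρ(x,y) ≤ 2D d(x,y)` whenever `x ∈ X`, `y ∈ S`. -/
theorem ultrametric_extension {X : Type u} [MetricSpace X] [Fintype X]
    (S : Set X) (D : ℝ) (hD : 1 ≤ D) (ρ₀ : S → S → ℝ) (hult : IsUltrametricOn ρ₀)
    (hlow : ∀ x y : S, dist (x : X) (y : X) ≤ ρ₀ x y)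
    (hup : ∀ x y : S, ρ₀ x y ≤ D * dist (x : X) (y : X)) :
    ∃ ρ : X → X → ℝ, IsUltrametricOn ρ ∧
      (∀ x y : S, ρ (x : X) (y : X) = ρ₀ x y) ∧
      (∀ x y : X, dist x y / 3 ≤ ρ x y) ∧
      (∀ (x : X) (y : S), ρ x (y : X) ≤ 2 * D * dist x (y : X)) := by
  classical
  obtain ⟨⟨h0, heq, hsymm, -⟩, hu⟩ := hult
  have tri : ∀ ρ : X → X → ℝ, (∀ x y, 0 ≤ ρ x y) → (∀ x y z, ρ x z ≤ max (ρ x y) (ρ y z)) →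
      ∀ x y z, ρ x z ≤ ρ x y + ρ y z := by
    intro ρ hn hm x y z
    have h1 := hn x y
    have h2 := hn y z
    exact (hm x y z).trans (max_le (by linarith) (by linarith))
  rcases S.eq_empty_or_nonempty with hS | hS
  · subst hS
    obtain ⟨C, hC⟩ : ∃ C, ∀ x y : X, dist x y ≤ C := by
      obtain ⟨C, hC⟩ := Metric.isBounded_iff.1 (Set.finite_univ (α := X)).isBounded
      exact ⟨C, fun x y => hC (Set.mem_univ x) (Set.mem_univ y)⟩
    have hn : ∀ x y : X, 0 ≤ (if x = y then 0 else |C| + 1 : ℝ) := by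
      intro x y; split_ifs <;> positivity
    have hm : ∀ x y z : X, (if x = z then 0 else |C| + 1 : ℝ) ≤
        max (if x = y then 0 else |C| + 1 : ℝ) (if y = z then 0 else |C| + 1 : ℝ) := by
      intro x y z
      have : (0:ℝ) ≤ |C| + 1 := by positivity
      by_cases h1 : x = y
      · subst h1; exact le_max_right _ _
      · rw [if_neg h1]
        refine le_max_of_le_left ?_
        split_ifs <;> linarith
    refine ⟨fun x y => if x = y then 0 else |C| + 1, ⟨⟨hn, ?_, ?_, tri _ hn hm⟩, hm⟩, ?_, ?_, ?_⟩
    · intro x y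
      have : |C| + 1 ≠ 0 := by positivity
      simp [this]
    · intro x y; simp only [eq_comm]
    · intro x; exact absurd x.2 (Set.notMem_empty _)
    · intro x y
      by_cases h : x = y
      · simp [h]
      · simp only [if_neg h]
        have := hC x y
        have := le_abs_self C
        have := abs_nonneg C
        linarith
    · intro x y; exact absurd y.2 (Set.notMem_empty _)
  · have hp : ∀ x : X, ∃ p : S, ∀ s : S, dist x p ≤ dist x s := by
      intro x
      have : Nonempty S := hS.to_subtype
      exact Finite.exists_min (fun s : S => dist x (s : X))
    choose p hp using hp
    have hpS : ∀ s : S, p s = s := by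
      intro s
      have h := hp s s
      rw [dist_self] at h
      exact Subtype.ext (dist_le_zero.1 h).symm
    let f : X → X → ℝ := fun x y => max (max (dist x (p x)) (dist y (p y))) (ρ₀ (p x) (p y))
    have f1 : ∀ x y : X, dist x (p x) ≤ f x y := fun x y =>
      (le_max_left _ _).trans (le_max_left _ _)
    have f2 : ∀ x y : X, dist y (p y) ≤ f x y := fun x y =>
      (le_max_right _ _).trans (le_max_left _ _)
    have f3 : ∀ x y, ρ₀ (p x) (p y) ≤ f x y := fun x y => le_max_right _ _
    have f0 : ∀ x y, 0 ≤ f x y := fun x y => (h0 _ _).trans (f3 x y)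
    have hlo : ∀ x y, dist x y / 3 ≤ f x y := by
      intro x y
      have a := f1 x y
      have b := f2 x y
      have c := (hlow (p x) (p y)).trans (f3 x y)
      have d := dist_triangle4 x (p x : X) (p y) y
      rw [dist_comm (p y : X) y] at d
      linarith
    have fu : ∀ x y z, f x z ≤ max (f x y) (f y z) := by
      intro x y z
      refine max_le (max_le ((f1 x y).trans (le_max_left _ _))
        ((f2 y z).trans (le_max_right _ _))) ?_
      exact (hu _ (p y) _).trans (max_le_max (f3 x y) (f3 y z))
    have fs : ∀ x y, f x y = f y x := by
      intro x y
      simp only [f]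
      rw [max_comm (dist x _), hsymm]
    have hn : ∀ x y : X, 0 ≤ (if x = y then 0 else f x y : ℝ) := by
      intro x y; split_ifs
      exacts [le_rfl, f0 _ _]
    have hm : ∀ x y z : X, (if x = z then 0 else f x z : ℝ) ≤
        max (if x = y then 0 else f x y : ℝ) (if y = z then 0 else f y z : ℝ) := by
      intro x y z
      by_cases h1 : x = y
      · subst h1; exact le_max_right _ _
      by_cases h2 : y = z
      · subst h2; exact le_max_left _ _
      rw [if_neg h1, if_neg h2]
      split_ifs
      · exact (f0 x y).trans (le_max_left _ _)
      · exact fu x y z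
    refine ⟨fun x y => if x = y then 0 else f x y, ⟨⟨hn, ?_, ?_, tri _ hn hm⟩, hm⟩, ?_, ?_, ?_⟩
    · intro x y
      by_cases h : x = y
      · simp [h]
      · simp only [h, if_false, iff_false]
        have := hlo x y
        have := dist_pos.2 h
        intro h'
        linarith
    · intro x y
      by_cases h : x = y
      · simp [h]
      · simp only [if_neg h, if_neg (Ne.symm h)]
        exact fs x y
    · intro x y
      by_cases h : x = y
      · simp [h, (heq y y).2 rfl]
      · have h' : (x : X) ≠ y := fun e => h (Subtype.ext e)
        simp only [if_neg h', f, hpS, dist_self, max_self]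
        exact max_eq_right (h0 x y)
    · intro x y
      by_cases h : x = y
      · simp [h]
      · simp only [if_neg h]
        exact hlo x y
    · intro x y
      have hd : 0 ≤ dist x (y : X) := dist_nonneg
      have hx := hp x y
      by_cases h : x = y
      · simp [h]
      · simp only [if_neg h, f, hpS, dist_self]
        refine max_le (max_le ?_ ?_) ?_
        · nlinarith
        · positivity
        · refine (hup _ _).trans ?_
          have t := dist_triangle (p x : X) x y
          rw [dist_comm (p x : X) x] at t
          have : dist (p x : X) y ≤ 2 * dist x (y : X) := by linarith
          nlinarith
end

section
/- There is a universal constant c > 0 such that the following holds. Let G = (V,E) be a finite connected simple graph with girth g and average degree k = 2|E|/|V| > 2, equipped with its shortest path metric d_G. Then for every map f : V → H into a real Hilbert space H and every λ, D > 0 satisfying λ d_G(x,y) ≤ ‖f(x) − f(y)‖_H ≤ D λ d_G(x,y) for all x,y ∈ V, one has D ≥ c (1 − 2/k) √g. -/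
universe u v

namespace GirthDist

open Finset

variable {V : Type u} [Fintype V] [DecidableEq V] (G : SimpleGraph V) [DecidableRel G.Adj]

section Avg
variable {E : Type v} [AddCommGroup E] [Module ℝ E]

/-- The averaging operator of the simple random walk. -/
noncomputable def P : (V → E) →ₗ[ℝ] (V → E) where
  toFun f x := (G.degree x : ℝ)⁻¹ • ∑ y ∈ G.neighborFinset x, f y
  map_add' f h := by
    funext x
    simp [Finset.sum_add_distrib]
  map_smul' c f := by
    funext x
    simp only [Pi.smul_apply, RingHom.id_apply]
    rw [← Finset.smul_sum, smul_comm]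

theorem P_apply (f : V → E) (x : V) :
    P G f x = (G.degree x : ℝ)⁻¹ • ∑ y ∈ G.neighborFinset x, f y := rfl

theorem deg_smul_P (f : V → E) (x : V) :
    (G.degree x : ℝ) • P G f x = ∑ y ∈ G.neighborFinset x, f y := by
  rw [P_apply]
  by_cases h : G.degree x = 0
  · have : G.neighborFinset x = ∅ := by
      rw [← Finset.card_eq_zero]; simpa using h
    simp [this]
  · rw [smul_smul, mul_inv_cancel₀ (by exact_mod_cast h), one_smul]

theorem sum_swap {M : Type*} [AddCommMonoid M] (F : V → V → M) :
    ∑ x, ∑ y ∈ G.neighborFinset x, F x y = ∑ x, ∑ y ∈ G.neighborFinset x, F y x := by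
  apply Finset.sum_comm'
  intro x y
  simp [G.adj_comm]

theorem pow_succ_apply (s : ℕ) (f : V → E) : (P G ^ (s+1)) f = P G ((P G ^ s) f) := by
  rw [pow_succ']; rfl

theorem pow_succ_apply' (s : ℕ) (f : V → E) : (P G ^ (s+1)) f = (P G ^ s) (P G f) := by
  rw [pow_succ]; rfl

end Avg

theorem sum_deg_P (u : V → ℝ) :
    ∑ x, (G.degree x : ℝ) * P G u x = ∑ x, (G.degree x : ℝ) * u x := by
  have : ∀ x, (G.degree x : ℝ) * P G u x = ∑ y ∈ G.neighborFinset x, u y :=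
    fun x => deg_smul_P G u x
  simp_rw [this]
  rw [sum_swap G (fun _ y => u y)]
  simp

theorem sum_deg_pow (s : ℕ) (u : V → ℝ) :
    ∑ x, (G.degree x : ℝ) * (P G ^ s) u x = ∑ x, (G.degree x : ℝ) * u x := by
  induction s with
  | zero => simp
  | succ s ih => rw [pow_succ_apply, sum_deg_P, ih]

theorem pow_mono (hG : G.Connected) (s : ℕ) (v : V) (w u : V → ℝ)
    (h : ∀ y, G.dist v y ≤ s → w y ≤ u y) : (P G ^ s) w v ≤ (P G ^ s) u v := by
  induction s generalizing v with
  | zero => simpa using h v (by simp)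
  | succ s ih =>
    rw [pow_succ_apply, pow_succ_apply, P_apply, P_apply]
    apply smul_le_smul_of_nonneg_left _ (by positivity)
    apply Finset.sum_le_sum
    intro y hy
    apply ih
    intro z hz
    apply h
    have h1 : G.dist v y = 1 := SimpleGraph.dist_eq_one_iff_adj.2 (by simpa using hy)
    have := hG.dist_triangle (u := v) (v := y) (w := z)
    omega

section Hilb
variable {H : Type v} [NormedAddCommGroup H] [InnerProductSpace ℝ H]

theorem pow_inner (s : ℕ) (a : H) (f : V → H) (x : V) :
    (P G ^ s) (fun y => inner ℝ a (f y)) x = inner ℝ a ((P G ^ s) f x) := by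
  induction s generalizing x with
  | zero => simp
  | succ s ih =>
    rw [pow_succ_apply, pow_succ_apply, P_apply, P_apply, inner_smul_right, inner_sum]
    simp_rw [ih]
    simp

/-- Weighted inner product. -/
noncomputable def ip (f h : V → H) : ℝ := ∑ x, (G.degree x : ℝ) * inner ℝ (f x) (h x)

theorem ip_comm (f h : V → H) : ip G f h = ip G h f := by
  unfold ip
  exact Finset.sum_congr rfl fun x _ => by rw [real_inner_comm]

theorem ip_sub_left (f f' h : V → H) : ip G (f - f') h = ip G f h - ip G f' h := by
  unfold ip
  rw [← Finset.sum_sub_distrib]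
  exact Finset.sum_congr rfl fun x _ => by rw [Pi.sub_apply, inner_sub_left, mul_sub]

theorem ip_sub_right (f h h' : V → H) : ip G f (h - h') = ip G f h - ip G f h' := by
  rw [ip_comm, ip_sub_left, ip_comm G h, ip_comm G h']

theorem ip_P (f h : V → H) :
    ip G f (P G h) = ∑ x, ∑ y ∈ G.neighborFinset x, inner ℝ (f x) (h y) := by
  unfold ip
  refine Finset.sum_congr rfl fun x _ => ?_
  rw [← inner_smul_right, deg_smul_P, inner_sum]

theorem ip_P_symm (f h : V → H) : ip G f (P G h) = ip G (P G f) h := by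
  rw [ip_comm G (P G f), ip_P, ip_P, sum_swap]
  exact Finset.sum_congr rfl fun x _ => Finset.sum_congr rfl fun y _ => real_inner_comm _ _

theorem energy (f : V → H) (e : ℝ) (he : e ^ 2 = 1) :
    ∑ x, ∑ y ∈ G.neighborFinset x, ‖f x + e • f y‖ ^ 2
      = 2 * (ip G f f + e * ip G f (P G f)) := by
  have h1 : ∀ x y, ‖f x + e • f y‖ ^ 2
      = ‖f x‖ ^ 2 + 2 * e * inner ℝ (f x) (f y) + ‖f y‖ ^ 2 := by
    intro x y
    rw [norm_add_sq_real, inner_smul_right, norm_smul, mul_pow, Real.norm_eq_abs, sq_abs, he]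
    ring
  simp_rw [h1, Finset.sum_add_distrib]
  rw [sum_swap G (fun _ y => ‖f y‖ ^ 2), ip_P]
  simp_rw [← Finset.mul_sum]
  have : ∑ x, ∑ y ∈ G.neighborFinset x, ‖f x‖ ^ 2 = ip G f f := by
    unfold ip
    refine Finset.sum_congr rfl fun x _ => ?_
    simp
  rw [this]
  ring

theorem pos_sub (f : V → H) : 0 ≤ ip G f f - ip G f (P G f) := by
  have := energy G f (-1) (by norm_num)
  have h2 : 0 ≤ ∑ x, ∑ y ∈ G.neighborFinset x, ‖f x + (-1 : ℝ) • f y‖ ^ 2 := by positivity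
  linarith

theorem pos_add (f : V → H) : 0 ≤ ip G f f + ip G f (P G f) := by
  have := energy G f 1 (by norm_num)
  have h2 : 0 ≤ ∑ x, ∑ y ∈ G.neighborFinset x, ‖f x + (1 : ℝ) • f y‖ ^ 2 := by positivity
  linarith

theorem B_P (f : V → H) :
    ip G (P G f) (P G f) - ip G (P G f) (P G (P G f)) ≤ ip G f f - ip G f (P G f) := by
  have h := pos_add G (f - P G f)
  simp only [map_sub, ip_sub_left, ip_sub_right] at h
  have h1 := ip_P_symm G f (P G f)
  have h2 := ip_comm G (P G f) f
  linarith

theorem B_pow (s : ℕ) (f : V → H) :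
    ip G ((P G ^ s) f) ((P G ^ s) f) - ip G ((P G ^ s) f) (P G ((P G ^ s) f))
      ≤ ip G f f - ip G f (P G f) := by
  induction s with
  | zero => simp
  | succ s ih =>
    rw [pow_succ_apply]
    exact (B_P G _).trans ih

theorem step (s : ℕ) (f : V → H) :
    ip G f ((P G ^ s) f) - ip G f ((P G ^ (s+1)) f) ≤ ip G f f - ip G f (P G f) := by
  have h := pos_sub G (f - (P G ^ s) f)
  have h2 := B_pow G s f
  simp only [map_sub, ip_sub_left, ip_sub_right] at h
  rw [pow_succ_apply]
  have h3 := ip_P_symm G f ((P G ^ s) f)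
  have h4 := ip_comm G ((P G ^ s) f) f
  have h5 := ip_comm G ((P G ^ s) f) (P G f)
  linarith

theorem markov (t : ℕ) (f : V → H) :
    ip G f f - ip G f ((P G ^ t) f) ≤ t * (ip G f f - ip G f (P G f)) := by
  induction t with
  | zero => simp
  | succ t ih =>
    have := step G t f
    push_cast
    linarith

theorem var_eq (t : ℕ) (f : V → H) :
    ∑ x, (G.degree x : ℝ) * (P G ^ t) (fun y => ‖f x - f y‖ ^ 2) x
      = 2 * (ip G f f - ip G f ((P G ^ t) f)) := by
  have hc : ∀ (c : ℝ) (x : V), (G.degree x : ℝ) * (P G ^ t) (fun _ : V => c) x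
      = (G.degree x : ℝ) * c := by
    intro c x
    induction t generalizing x with
    | zero => simp
    | succ t ih =>
      rw [pow_succ_apply, ← smul_eq_mul, deg_smul_P]
      have h1 : ∀ y ∈ G.neighborFinset x, (P G ^ t) (fun _ : V => c) y = c := by
        intro y hy
        have : 0 < G.degree y := by
          rw [G.degree_pos_iff_exists_adj]
          exact ⟨x, ((by simpa using hy : G.Adj x y)).symm⟩
        exact mul_left_cancel₀ (by positivity) (ih y)
      rw [Finset.sum_congr rfl h1]
      simp
  have key : ∀ x, (G.degree x : ℝ) * (P G ^ t) (fun y => ‖f x - f y‖ ^ 2) x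
      = (G.degree x : ℝ) * inner ℝ (f x) (f x)
        - 2 * ((G.degree x : ℝ) * inner ℝ (f x) ((P G ^ t) f x))
        + (G.degree x : ℝ) * (P G ^ t) (fun y => ‖f y‖ ^ 2) x := by
    intro x
    have : (fun y => ‖f x - f y‖ ^ 2) = (fun _ : V => ‖f x‖ ^ 2)
        - (2 : ℝ) • (fun y => inner ℝ (f x) (f y)) + (fun y => ‖f y‖ ^ 2) := by
      funext y
      simp [norm_sub_sq_real]
    rw [this, map_add, map_sub, map_smul]
    simp only [Pi.add_apply, Pi.sub_apply, Pi.smul_apply, smul_eq_mul]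
    rw [pow_inner, mul_add, mul_sub, hc, real_inner_self_eq_norm_sq]
    ring
  simp_rw [key]
  rw [Finset.sum_add_distrib, Finset.sum_sub_distrib, sum_deg_pow, ← Finset.mul_sum]
  unfold ip
  simp only [real_inner_self_eq_norm_sq]
  ring

end Hilb

omit [Fintype V] [DecidableRel G.Adj] in
theorem unique_back (hG : G.Connected) (x v y₁ y₂ : V) (h : 2 * G.dist x v + 2 < G.girth)
    (a₁ : G.Adj v y₁) (a₂ : G.Adj v y₂) (d₁ : G.dist x y₁ ≤ G.dist x v)
    (d₂ : G.dist x y₂ ≤ G.dist x v) : y₁ = y₂ := by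
  by_contra hne
  have main : ∀ y, G.Adj v y → G.dist x y ≤ G.dist x v →
      ∃ p : G.Walk v x, p.IsPath ∧ p.length ≤ G.dist x v + 1 ∧ p.snd = y := by
    intro y a d
    obtain ⟨p, hp, hl⟩ := hG.exists_path_of_dist y x
    rw [SimpleGraph.dist_comm] at hl
    refine ⟨SimpleGraph.Walk.cons a p, ?_, ?_, ?_⟩
    · rw [SimpleGraph.Walk.cons_isPath_iff]
      refine ⟨hp, fun hv => ?_⟩
      have e := congrArg SimpleGraph.Walk.length (p.take_spec hv)
      rw [SimpleGraph.Walk.length_append] at e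
      have e1 := SimpleGraph.dist_le (p.takeUntil v hv)
      have e2 := SimpleGraph.dist_le (p.dropUntil v hv)
      rw [SimpleGraph.dist_eq_one_iff_adj.2 a.symm] at e1
      rw [SimpleGraph.dist_comm] at e2
      omega
    · simp; omega
    · simp
  obtain ⟨p, hp, lp, sp⟩ := main y₁ a₁ d₁
  obtain ⟨q, hq, lq, sq⟩ := main y₂ a₂ d₂
  have hpq : p ≠ q := by
    rintro rfl
    exact hne (sp.symm.trans sq)
  obtain ⟨w, hw⟩ := hp.exists_isCycle_length_le_add_of_ne hq hpq
  have : ∃ c : G.Walk w w, c.IsCycle ∧ c.length ≤ p.length + q.length := by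
    first | exact hw | exact hw.2 | exact hw.2.2
  obtain ⟨c, hc, hcl⟩ := this
  have := SimpleGraph.girth_le_length hc
  omega

theorem drift (hG : G.Connected) (hdeg : ∀ v, 0 < G.degree v) (x v : V)
    (h : 2 * G.dist x v + 2 < G.girth) :
    (G.dist x v : ℝ) + (1 - 2 / (G.degree v : ℝ)) ≤ P G (fun y => (G.dist x y : ℝ)) v := by
  have hd : (0 : ℝ) < G.degree v := by exact_mod_cast hdeg v
  have h0 := deg_smul_P G (fun y => (G.dist x y : ℝ)) v
  rw [smul_eq_mul] at h0
  set N := G.neighborFinset v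
  let S := N.filter (fun y => G.dist x y ≤ G.dist x v)
  have hS : S.card ≤ 1 := by
    rw [Finset.card_le_one]
    intro a ha b hb
    simp only [S, N, Finset.mem_filter, SimpleGraph.mem_neighborFinset] at ha hb
    exact unique_back G hG x v a b h ha.1 hb.1 ha.2 hb.2
  have hlow : ∑ y ∈ N, ((G.dist x v : ℝ) + 1 - 2 * (if G.dist x y ≤ G.dist x v then 1 else 0))
      ≤ ∑ y ∈ N, (G.dist x y : ℝ) := by
    apply Finset.sum_le_sum
    intro y hy
    split_ifs with hc
    · have h1 : G.dist y v = 1 :=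
        SimpleGraph.dist_eq_one_iff_adj.2 ((by simpa [N] using hy : G.Adj v y)).symm
      have h2 := hG.dist_triangle (u := x) (v := y) (w := v)
      have : (G.dist x v : ℝ) ≤ G.dist x y + 1 := by exact_mod_cast (by omega)
      linarith
    · have : (G.dist x v : ℝ) + 1 ≤ G.dist x y := by exact_mod_cast (by omega)
      linarith
  rw [Finset.sum_sub_distrib, ← Finset.mul_sum, Finset.sum_boole, ← h0] at hlow
  simp only [Finset.sum_const, nsmul_eq_mul, N, SimpleGraph.card_neighborFinset_eq_degree] at hlow
  have hS' : (S.card : ℝ) ≤ 1 := by exact_mod_cast hS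
  have h3 : (G.degree v : ℝ) * ((G.dist x v : ℝ) + (1 - 2 / (G.degree v : ℝ)))
      = (G.degree v : ℝ) * ((G.dist x v : ℝ) + 1) - 2 := by
    field_simp
    ring
  refine le_of_mul_le_mul_left ?_ hd
  rw [h3]
  simp only [S, N] at hS'
  linarith

theorem mean_dist (hG : G.Connected) (hdeg : ∀ v, 0 < G.degree v) (t : ℕ)
    (h : 2 * t < G.girth) :
    (t : ℝ) * ∑ x, (G.degree x : ℝ) * (1 - 2 / (G.degree x : ℝ))
      ≤ ∑ x, (G.degree x : ℝ) * (P G ^ t) (fun y => (G.dist x y : ℝ)) x := by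
  induction t with
  | zero => simp
  | succ t ih =>
    have ih := ih (by omega)
    have h1 := sum_deg_pow G t (fun x => 1 - 2 / (G.degree x : ℝ))
    have h2 : ∑ x, (G.degree x : ℝ) * ((P G ^ t) (fun y => (G.dist x y : ℝ)) x
          + (P G ^ t) (fun x => 1 - 2 / (G.degree x : ℝ)) x)
        ≤ ∑ x, (G.degree x : ℝ) * (P G ^ (t+1)) (fun y => (G.dist x y : ℝ)) x := by
      apply Finset.sum_le_sum
      intro x _
      apply mul_le_mul_of_nonneg_left _ (by positivity)
      rw [pow_succ_apply', ← Pi.add_apply, ← map_add]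
      apply pow_mono G hG
      intro y hy
      exact drift G hG hdeg x y (by omega)
    simp_rw [mul_add] at h2
    rw [Finset.sum_add_distrib] at h2
    push_cast
    linarith

end GirthDist

/-- **Markov-type lower bound for graphs with large girth (Linial–Magen–Naor /
Bartal–Linial–Mendel–Naor).** There is a universal constant `c > 0` such that if `G` is a
finite connected simple graph with girth `g` and average degree `k = 2|E|/|V| > 2`, then any
embedding of `(V, d_G)` into a Hilbert space with scaling `λ > 0` and distortion bound `D > 0`
satisfies `D ≥ c (1 - 2/k) √g`. -/
theorem girth_average_degree_euclidean_distortion :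
    ∃ c : ℝ, 0 < c ∧
      ∀ (V : Type u) [Fintype V] [DecidableEq V] (G : SimpleGraph V) [DecidableRel G.Adj],
        G.Connected → ∀ g : ℕ, G.girth = (g : ℕ∞) →
        ∀ k : ℝ, k = 2 * (G.edgeFinset.card : ℝ) / (Fintype.card V : ℝ) → 2 < k →
        ∀ (H : Type v) [NormedAddCommGroup H] [InnerProductSpace ℝ H],
          ∀ (f : V → H) (lam D : ℝ), 0 < lam → 0 < D →
            (∀ x y : V, lam * (G.dist x y : ℝ) ≤ ‖f x - f y‖ ∧
              ‖f x - f y‖ ≤ D * (lam * (G.dist x y : ℝ))) →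
            c * (1 - 2 / k) * Real.sqrt (g : ℝ) ≤ D := by
  classical
  refine ⟨1 / 2, by norm_num, ?_⟩
  intro V _ _ G _ hG g hg k hk hk2 H _ _ f lam D hlam hD hf
  have hg' : G.girth = g := by exact_mod_cast hg
  rcases Nat.eq_zero_or_pos g with h0 | hpos
  · subst h0
    simpa using hD.le
  have hac : ¬ G.IsAcyclic := by
    rw [← SimpleGraph.girth_eq_zero]
    omega
  have hg3 : 3 ≤ g := hg' ▸ SimpleGraph.three_le_girth hac
  have hcardpos : 0 < Fintype.card V := by
    have := hG.nonempty
    exact Fintype.card_pos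
  have hnt : Nontrivial V := by
    by_contra hn
    rw [not_nontrivial_iff_subsingleton] at hn
    exact hac SimpleGraph.IsAcyclic.of_subsingleton
  have hdeg : ∀ v, 0 < G.degree v := fun v => hG.preconnected.degree_pos_of_nontrivial v
  obtain ⟨t, ht1, ht2, ht3⟩ : ∃ t : ℕ, 1 ≤ t ∧ 2 * t < g ∧ g ≤ 4 * t :=
    ⟨(g - 1) / 2, by omega, by omega, by omega⟩
  set M : ℝ := ∑ x, (G.degree x : ℝ) with hM
  have hME : M = 2 * (G.edgeFinset.card : ℝ) := by
    have := G.sum_degrees_eq_twice_card_edges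
    rw [hM]
    exact_mod_cast this
  have hn : (0 : ℝ) < Fintype.card V := by exact_mod_cast hcardpos
  have hMk : M = k * Fintype.card V := by
    rw [hk, hME]
    field_simp
  have hMpos : 0 < M := by rw [hMk]; positivity
  set a : ℝ := 1 - 2 / k with ha
  have hapos : 0 ≤ a := by
    rw [ha, sub_nonneg, div_le_one (by linarith)]
    exact hk2.le
  have hsum : ∑ x, (G.degree x : ℝ) * (1 - 2 / (G.degree x : ℝ)) = M * a := by
    have : ∀ x, (G.degree x : ℝ) * (1 - 2 / (G.degree x : ℝ)) = (G.degree x : ℝ) - 2 := by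
      intro x
      have : (0 : ℝ) < G.degree x := by exact_mod_cast hdeg x
      field_simp
    simp_rw [this]
    rw [Finset.sum_sub_distrib, ← hM, ha, hMk]
    have : k ≠ 0 := by linarith
    simp
    field_simp
  have hmean := GirthDist.mean_dist G hG hdeg t (by omega)
  rw [hsum] at hmean
  have hvar := GirthDist.var_eq G t f
  have hmk := GirthDist.markov G t f
  have hen := GirthDist.energy G f (-1) (by norm_num)
  have hub : ∑ x, ∑ y ∈ G.neighborFinset x, ‖f x + (-1 : ℝ) • f y‖ ^ 2 ≤ M * (D * lam) ^ 2 := by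
    rw [hM, Finset.sum_mul]
    apply Finset.sum_le_sum
    intro x _
    have : ∀ y ∈ G.neighborFinset x, ‖f x + (-1 : ℝ) • f y‖ ^ 2 ≤ (D * lam) ^ 2 := by
      intro y hy
      have h1 : G.dist x y = 1 := SimpleGraph.dist_eq_one_iff_adj.2 (by simpa using hy)
      have h2 := (hf x y).2
      rw [h1] at h2
      have h3 : f x + (-1 : ℝ) • f y = f x - f y := by
        rw [neg_one_smul, sub_eq_add_neg]
      rw [h3]
      apply pow_le_pow_left₀ (norm_nonneg _)
      simpa using h2
    refine (Finset.sum_le_sum this).trans ?_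
    simp
  set m : ℝ := t * a with hm
  have hm0 : 0 ≤ m := by positivity
  -- lower bound
  have hlow : ∑ x, (G.degree x : ℝ) * (lam ^ 2 * (2 * m *
        (GirthDist.P G ^ t) (fun y => (G.dist x y : ℝ)) x
        - m ^ 2 * (GirthDist.P G ^ t) (fun _ => (1 : ℝ)) x))
      ≤ ∑ x, (G.degree x : ℝ) * (GirthDist.P G ^ t) (fun y => ‖f x - f y‖ ^ 2) x := by
    apply Finset.sum_le_sum
    intro x _
    apply mul_le_mul_of_nonneg_left _ (by positivity)
    have h1 := GirthDist.pow_mono G hG t x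
      (lam ^ 2 • ((2 * m) • (fun y => (G.dist x y : ℝ)) - m ^ 2 • (fun _ => (1 : ℝ))))
      (fun y => ‖f x - f y‖ ^ 2) (by
        intro y _
        simp only [Pi.smul_apply, Pi.sub_apply, smul_eq_mul]
        have h2 := (hf x y).1
        have h3 : (lam * (G.dist x y : ℝ)) ^ 2 ≤ ‖f x - f y‖ ^ 2 :=
          pow_le_pow_left₀ (by positivity) h2 2
        nlinarith [mul_nonneg (sq_nonneg lam) (sq_nonneg ((G.dist x y : ℝ) - m))])
    rw [map_smul, map_sub, map_smul, map_smul] at h1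
    simpa only [Pi.smul_apply, Pi.sub_apply, smul_eq_mul] using h1
  have hone := GirthDist.sum_deg_pow G t (fun _ => (1 : ℝ))
  simp only [mul_one] at hone
  rw [← hM] at hone
  have heq : ∑ x, (G.degree x : ℝ) * (lam ^ 2 * (2 * m *
        (GirthDist.P G ^ t) (fun y => (G.dist x y : ℝ)) x
        - m ^ 2 * (GirthDist.P G ^ t) (fun _ => (1 : ℝ)) x))
      = lam ^ 2 * (2 * m * ∑ x, (G.degree x : ℝ) *
          (GirthDist.P G ^ t) (fun y => (G.dist x y : ℝ)) x - m ^ 2 * M) := by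
    rw [← hone, Finset.mul_sum, Finset.mul_sum, ← Finset.sum_sub_distrib, Finset.mul_sum]
    exact Finset.sum_congr rfl fun x _ => by ring
  rw [heq] at hlow
  have hlow2 : lam ^ 2 * (M * m ^ 2) ≤ lam ^ 2 * (2 * m * ∑ x, (G.degree x : ℝ) *
          (GirthDist.P G ^ t) (fun y => (G.dist x y : ℝ)) x - m ^ 2 * M) := by
    apply mul_le_mul_of_nonneg_left _ (by positivity)
    have : m * (M * m) ≤ m * ∑ x, (G.degree x : ℝ) *
          (GirthDist.P G ^ t) (fun y => (G.dist x y : ℝ)) x := by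
      apply mul_le_mul_of_nonneg_left _ hm0
      rw [hm]
      linarith
    nlinarith
  have htpos : (0 : ℝ) < t := by exact_mod_cast ht1
  have hfin : lam ^ 2 * (M * m ^ 2) ≤ t * (M * (D * lam) ^ 2) := by
    have : (t : ℝ) * (2 * (GirthDist.ip G f f + -1 * GirthDist.ip G f (GirthDist.P G f)))
        ≤ t * (M * (D * lam) ^ 2) := by
      apply mul_le_mul_of_nonneg_left _ htpos.le
      rw [← hen]; exact hub
    linarith
  have hfin2 : t * a ^ 2 ≤ D ^ 2 := by
    have hq : 0 < lam ^ 2 * M * t := by positivity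
    refine le_of_mul_le_mul_left ?_ hq
    rw [hm] at hfin
    linarith
  have hg4 : (g : ℝ) ≤ 4 * t := by exact_mod_cast ht3
  refine abs_le_of_sq_le_sq' ?_ hD.le |>.2
  have hs : Real.sqrt (g : ℝ) ^ 2 = g := Real.sq_sqrt (by positivity)
  rw [mul_pow, mul_pow, hs]
  nlinarith [mul_le_mul_of_nonneg_left hg4 (sq_nonneg a)]
end

section
/- Let G = (V,E) be a finite connected k-regular simple graph with n vertices and girth g, with shortest path metric d_G. For a subset S ⊆ V and m ∈ ℕ, let E_{G^{(m)}}(S) denote the number of unordered pairs {u,v} ⊆ S with d_G(u,v) = m. Then for every even integer m with 0 < m < g/2 and every nonempty S ⊆ V, 2 E_{G^{(m)}}(S)/|S| ≥ (|S|/n) · k(k−1)^{m−1} − (k−1)^{m/2−1} k(m+1). In particular, if |S|/n ≥ (2m+2)/(k−1)^{m/2}, then 2 E_{G^{(m)}}(S)/|S| ≥ k(k−1)^{m−1} |S| / (2n). -/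
universe u

open Polynomial
noncomputable def tP (q : ℝ) : ℕ → ℝ[X]
  | 0 => 2
  | 1 => X
  | (n+2) => X * tP q (n+1) - C q * tP q n

noncomputable def wP (q : ℝ) : ℕ → ℝ[X]
  | 0 => 1
  | 1 => X
  | (n+2) => X * wP q (n+1) - C q * wP q n

noncomputable def gP (q : ℝ) : ℕ → ℝ[X]
  | 0 => 1
  | 1 => X
  | (n+2) => tP q (n+2) + C (q - 1) * wP q n

lemma tP_step (q : ℝ) (n : ℕ) : tP q (n+2) = X * tP q (n+1) - C q * tP q n := by
  rw [tP]
lemma wP_step (q : ℝ) (n : ℕ) : wP q (n+2) = X * wP q (n+1) - C q * wP q n := by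
  rw [wP]

lemma tP_dbl (q : ℝ) (j : ℕ) : tP q (2*j) = tP q j ^ 2 - C (2 * q^j) ∧
    tP q (2*j+1) = tP q j * tP q (j+1) - C (q^j) * X ∧
    tP q (j+1) ^ 2 - X * tP q j * tP q (j+1) + C q * tP q j ^ 2 = C (q^j) * (4 * C q - X^2) := by
  induction j with
  | zero => simp [tP]; refine ⟨by rw [show (C 2 : ℝ[X]) = 2 from rfl]; norm_num, by ring, by ring⟩
  | succ j ih =>
    obtain ⟨h1, h2, h3⟩ := ih
    have e1 := tP_step q (2*j)
    have e2 := tP_step q (2*j+1)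
    have e3 := tP_step q j
    rw [show 2 * (j+1) = 2*j+2 by ring]
    simp only [C_mul, C_pow, map_ofNat] at *
    have a1 : tP q (2*j+2) = tP q (j+1) ^ 2 - 2 * C q ^ (j+1) := by
      rw [e1, h1, h2]; linear_combination -h3
    refine ⟨a1, ?_, ?_⟩
    · rw [show 2*j+2+1 = 2*j+1+2 by ring, e2, show 2*j+1+1 = 2*j+2 by ring, a1, h2,
        show j+1+1 = j+2 by ring, e3]; ring
    · rw [show j+1+1 = j+2 by ring, e3]; linear_combination C q * h3

lemma wP_t (q : ℝ) (n : ℕ) : wP q (n+2) = C q * wP q n + tP q (n+2) := by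
  induction n using Nat.twoStepInduction with
  | zero => simp [wP, tP]; ring
  | one => simp [wP, tP]; ring
  | more n h1 h2 =>
    have e1 := tP_step q (n+2)
    have e2 := wP_step q (n+2)
    have e3 := wP_step q n
    rw [e2, e1]
    rw [show n+1+2 = n+2+1 by ring] at h2
    linear_combination X * h2 - C q * h1 - C q * e3

lemma gP_two (q : ℝ) : gP q 2 = X * gP q 1 - C (q+1) * gP q 0 := by
  simp [gP, tP, wP]; ring

lemma gP_step (q : ℝ) (n : ℕ) : gP q (n+3) = X * gP q (n+2) - C q * gP q (n+1) := by
  cases n with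
  | zero => simp [gP, tP, wP]; ring
  | succ n =>
    have e1 := tP_step q (n+2)
    have e2 := wP_step q n
    show tP q (n+4) + C (q - 1) * wP q (n+2) = X * (tP q (n+3) + C (q - 1) * wP q (n+1)) -
      C q * (tP q (n+2) + C (q - 1) * wP q n)
    linear_combination e1 + C (q-1) * e2

lemma gP_lower (q : ℝ) (hq : 1 ≤ q) (Q : ℝ[X] →ₗ[ℝ] ℝ) (hQ : ∀ p, 0 ≤ Q (p^2)) (h : ℕ) :
    -(q^h * (q+1) * (2*h+3)) * Q 1 ≤ Q (gP q (2*h+2)) := by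
  have h1 : 0 ≤ Q 1 := by simpa using hQ 1
  have hC : ∀ (c : ℝ) p, Q (C c * p) = c * Q p := by
    intro c p; rw [← smul_eq_C_mul, map_smul, smul_eq_mul]
  have ht : ∀ j, -(2 * q^j) * Q 1 ≤ Q (tP q (2*j)) := by
    intro j
    rw [(tP_dbl q j).1, map_sub, ← mul_one (C (2 * q^j)), hC]
    linarith [hQ (tP q j)]
  have hw : ∀ j : ℕ, q^j * (1 - 2*j) * Q 1 ≤ Q (wP q (2*j)) := by
    intro j
    induction j with
    | zero => simp [wP]
    | succ j ih =>
      have := ht (j+1)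
      rw [show 2*(j+1) = 2*j+2 by ring] at *
      rw [wP_t, map_add, hC]
      have := mul_le_mul_of_nonneg_left ih (by linarith : 0 ≤ q)
      push_cast
      rw [pow_succ] at *
      linarith
  have e : gP q (2*h+2) = tP q (2*h+2) + C (q-1) * wP q (2*h) := rfl
  rw [e, map_add, hC]
  have a := ht (h+1)
  have b := mul_le_mul_of_nonneg_left (hw h) (by linarith : 0 ≤ q-1)
  rw [show 2*(h+1) = 2*h+2 by ring, pow_succ] at a
  have : 0 ≤ (q^h * Q 1) * (2*q+4*h+2) := by positivity
  nlinarith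

open SimpleGraph
lemma short_path_unique {V : Type u} [DecidableEq V] (G : SimpleGraph V) {u v : V}
    (p q : G.Walk u v) (hp : p.IsPath) (hq : q.IsPath) (h : p.length + q.length < G.girth) :
    p = q := by
  classical
  let s : Finset (Sym2 V) := p.edges.toFinset ∪ q.edges.toFinset
  let H : SimpleGraph V := fromEdgeSet (s : Set (Sym2 V))
  have hs : s.card ≤ p.length + q.length := by
    refine (Finset.card_union_le _ _).trans ?_
    have a := List.toFinset_card_le p.edges
    have b := List.toFinset_card_le q.edges
    rw [Walk.length_edges] at a b
    omega
  have hsG : ∀ e ∈ s, e ∈ G.edgeSet := by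
    intro e he
    simp only [s, Finset.mem_union, List.mem_toFinset] at he
    rcases he with he | he
    · exact p.edges_subset_edgeSet he
    · exact q.edges_subset_edgeSet he
  have hHs : ∀ e, e ∈ H.edgeSet ↔ e ∈ s := by
    intro e
    simp only [H, edgeSet_fromEdgeSet, Set.mem_sdiff, Finset.mem_coe]
    exact ⟨fun h => h.1, fun h => ⟨h, G.not_isDiag_of_mem_edgeSet (hsG e h)⟩⟩
  have hac : H.IsAcyclic := by
    intro a c hc
    have hcG : ∀ e ∈ c.edges, e ∈ G.edgeSet := fun e he =>
      hsG e ((hHs e).1 (c.edges_subset_edgeSet he))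
    have h1 := girth_le_length (hc.transfer hcG)
    rw [Walk.length_transfer] at h1
    have h2 : c.length ≤ s.card := by
      rw [← Walk.length_edges, ← List.toFinset_card_of_nodup hc.isTrail.edges_nodup]
      apply Finset.card_le_card
      intro e he
      exact (hHs e).1 (c.edges_subset_edgeSet (List.mem_toFinset.1 he))
    omega
  have hpH : ∀ e ∈ p.edges, e ∈ H.edgeSet := fun e he => (hHs e).2 (by simp [s, he])
  have hqH : ∀ e ∈ q.edges, e ∈ H.edgeSet := fun e he => (hHs e).2 (by simp [s, he])
  have := (hac.subsingleton_path u v).elim ⟨_, hp.transfer hpH⟩ ⟨_, hq.transfer hqH⟩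
  have := congrArg Subtype.val this
  simp only at this
  have h3 := congrArg Walk.support this
  rw [Walk.support_transfer, Walk.support_transfer] at h3
  exact Walk.ext_support h3

lemma nbr_unique {V : Type u} [DecidableEq V] (G : SimpleGraph V) (hconn : G.Connected)
    {u v w₁ w₂ : V} (h1 : G.Adj u w₁) (h2 : G.Adj u w₂) (d1 : G.dist w₁ v ≤ G.dist u v)
    (d2 : G.dist w₂ v ≤ G.dist u v) (h : G.dist w₁ v + G.dist w₂ v + 2 < G.girth) : w₁ = w₂ := by
  have key : ∀ w, G.Adj u w → G.dist w v ≤ G.dist u v →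
      ∃ p : G.Walk u v, p.IsPath ∧ p.length = G.dist w v + 1 ∧ p.snd = w := by
    intro w hw d
    obtain ⟨p, hp, hl⟩ := hconn.exists_path_of_dist w v
    refine ⟨Walk.cons hw p, ?_, by simp [hl], by simp⟩
    rw [Walk.cons_isPath_iff]
    refine ⟨hp, fun hu => ?_⟩
    have e1 := congrArg Walk.length (p.take_spec hu)
    rw [Walk.length_append] at e1
    have e2 := dist_le (p.dropUntil u hu)
    have e3 : 0 < (p.takeUntil u hu).length := by
      rw [Nat.pos_iff_ne_zero]
      intro h0
      exact hw.ne' (Walk.eq_of_length_eq_zero h0)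
    omega
  obtain ⟨p, hp, lp, sp⟩ := key _ h1 d1
  obtain ⟨q, hq, lq, sq⟩ := key _ h2 d2
  have := short_path_unique G p q hp hq (by omega)
  rw [← sp, ← sq, this]

lemma exists_nbr {V : Type u} (G : SimpleGraph V) (hconn : G.Connected) {u v : V} {s : ℕ}
    (h : G.dist u v = s + 1) : ∃ w, G.Adj u w ∧ G.dist w v = s := by
  obtain ⟨p, hp⟩ := hconn.exists_walk_length_eq_dist u v
  cases p with
  | nil => simp at h
  | cons hw p =>
    rename_i w
    refine ⟨w, hw, ?_⟩
    have a := dist_le p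
    simp at hp
    have b := hconn.dist_triangle (u := u) (v := w) (w := v)
    have c : G.dist u w = 1 := dist_eq_one_iff_adj.2 hw
    omega

lemma two_le_deg {V : Type u} [Fintype V] [DecidableEq V] (G : SimpleGraph V) [DecidableRel G.Adj]
    (k : ℕ) (hreg : G.IsRegularOfDegree k) (h : 0 < G.girth) : 2 ≤ k := by
  have : ¬ G.IsAcyclic := by rw [← girth_eq_zero]; omega
  simp only [IsAcyclic, not_forall, not_not] at this
  obtain ⟨v, c, hc⟩ := this
  rw [← hreg v, ← card_neighborFinset_eq_degree]
  have : ({c.snd, c.penultimate} : Finset V) ⊆ G.neighborFinset v := by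
    intro x hx
    simp at hx
    rw [mem_neighborFinset]
    rcases hx with rfl | rfl
    · exact c.adj_snd hc.not_nil
    · exact (c.adj_penultimate hc.not_nil).symm
  rw [← Finset.card_pair hc.snd_ne_penultimate]
  exact Finset.card_le_card this

noncomputable def dMat {V : Type u} (G : SimpleGraph V) (r : ℕ) : Matrix V V ℝ :=
  Matrix.of fun u v => if G.dist u v = r then 1 else 0

lemma count_nbr {V : Type u} [Fintype V] [DecidableEq V] (G : SimpleGraph V) [DecidableRel G.Adj]
    (k : ℕ) (hreg : G.IsRegularOfDegree k) (hconn : G.Connected) (r : ℕ)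
    (hr : 2 * (r + 2) < G.girth) (u v : V) :
    (((G.neighborFinset u).filter (fun w => G.dist w v = r + 1)).card : ℝ) =
      (if G.dist u v = r + 2 then 1 else 0) +
      (if r = 0 then (k:ℝ) else k - 1) * (if G.dist u v = r then 1 else 0) := by
  have tri : ∀ w, G.Adj u w → G.dist u v ≤ G.dist w v + 1 ∧ G.dist w v ≤ G.dist u v + 1 := by
    intro w hw
    have c : G.dist u w = 1 := dist_eq_one_iff_adj.2 hw
    have c' : G.dist w u = 1 := dist_eq_one_iff_adj.2 hw.symm
    have b := hconn.dist_triangle (u := u) (v := w) (w := v)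
    have b' := hconn.dist_triangle (u := w) (v := u) (w := v)
    omega
  have hk : (G.neighborFinset u).card = k := by rw [card_neighborFinset_eq_degree, hreg u]
  by_cases h1 : G.dist u v = r + 2
  · obtain ⟨w, hw, hd⟩ := exists_nbr G hconn h1
    have : (G.neighborFinset u).filter (fun w => G.dist w v = r + 1) = {w} := by
      ext x
      simp only [Finset.mem_filter, mem_neighborFinset, Finset.mem_singleton]
      constructor
      · rintro ⟨hx, dx⟩
        exact nbr_unique (v := v) G hconn hx hw (by omega) (by omega) (by omega)
      · rintro rfl; exact ⟨hw, hd⟩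
    rw [this]; simp [h1]
  by_cases h2 : G.dist u v = r
  · rcases r with _ | r
    · have : (G.neighborFinset u).filter (fun w => G.dist w v = 0 + 1) = G.neighborFinset u := by
        apply Finset.filter_true_of_mem
        intro w hw
        rw [mem_neighborFinset] at hw
        have : u = v := hconn.dist_eq_zero_iff.1 h2
        subst this
        exact dist_eq_one_iff_adj.2 hw.symm
      rw [this, hk]; simp [h2]
    · obtain ⟨w, hw, hd⟩ := exists_nbr G hconn h2
      have : (G.neighborFinset u).filter (fun w => G.dist w v = r + 1 + 1) =
          (G.neighborFinset u).erase w := by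
        ext x
        simp only [Finset.mem_filter, mem_neighborFinset, Finset.mem_erase]
        constructor
        · rintro ⟨hx, dx⟩
          exact ⟨by rintro rfl; omega, hx⟩
        · rintro ⟨hx, dx⟩
          refine ⟨dx, ?_⟩
          by_contra hne
          have := tri x dx
          exact hx (nbr_unique (v := v) G hconn dx hw (by omega) (by omega) (by omega))
      rw [this, Finset.card_erase_of_mem (by simpa using hw), hk]
      have : 0 < k := by rw [← hk]; exact Finset.card_pos.2 ⟨w, by simpa using hw⟩
      simp [h2, Nat.cast_sub (show 1 ≤ k from this)]
  · have : (G.neighborFinset u).filter (fun w => G.dist w v = r + 1) = ∅ := by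
      apply Finset.filter_false_of_mem
      intro w hw dw
      rw [mem_neighborFinset] at hw
      have t := tri w hw
      have h3 : G.dist u v = r + 1 := by omega
      obtain ⟨x, hx, dx⟩ := exists_nbr G hconn h3
      have := nbr_unique (v := v) G hconn hw hx (by omega) (by omega) (by omega)
      subst this
      omega
    rw [this]; simp [h1, h2]

lemma dMat_rec {V : Type u} [Fintype V] [DecidableEq V] (G : SimpleGraph V) [DecidableRel G.Adj]
    (k : ℕ) (hreg : G.IsRegularOfDegree k) (hconn : G.Connected) (r : ℕ)
    (hr : 2 * (r + 2) < G.girth) :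
    dMat G (r+2) = G.adjMatrix ℝ * dMat G (r+1) - (if r = 0 then (k:ℝ) else k - 1) • dMat G r := by
  ext u v
  have := count_nbr G k hreg hconn r hr u v
  rw [Matrix.sub_apply, adjMatrix_mul_apply, Matrix.smul_apply, smul_eq_mul]
  simp only [dMat, Matrix.of_apply]
  rw [Finset.sum_boole, this]; ring

lemma dMat_zero {V : Type u} [Fintype V] [DecidableEq V] (G : SimpleGraph V)
    (hconn : G.Connected) : dMat G 0 = 1 := by
  ext u v
  simp [dMat, Matrix.one_apply, hconn.dist_eq_zero_iff]

lemma dMat_one {V : Type u} [Fintype V] [DecidableEq V] (G : SimpleGraph V) [DecidableRel G.Adj] :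
    dMat G 1 = G.adjMatrix ℝ := by
  ext u v
  simp [dMat, dist_eq_one_iff_adj]

lemma dMat_eq {V : Type u} [Fintype V] [DecidableEq V] (G : SimpleGraph V) [DecidableRel G.Adj]
    (k : ℕ) (hreg : G.IsRegularOfDegree k) (hconn : G.Connected) (r : ℕ)
    (hr : 2 * r < G.girth) : dMat G r = aeval (G.adjMatrix ℝ) (gP ((k:ℝ)-1) r) := by
  induction r using Nat.strong_induction_on with
  | _ r ih =>
    match r with
    | 0 => rw [dMat_zero G hconn]; simp [gP]
    | 1 => rw [dMat_one]; simp [gP]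
    | 2 =>
      rw [dMat_rec G k hreg hconn 0 hr, ih 1 (by omega) (by omega), ih 0 (by omega) (by omega),
        gP_two, map_sub, map_mul, map_mul, aeval_X, aeval_C, ← Algebra.smul_def]
      simp
    | (n+3) =>
      rw [dMat_rec G k hreg hconn (n+1) hr, ih (n+2) (by omega) (by omega),
        ih (n+1) (by omega) (by omega), gP_step, map_sub, map_mul, map_mul, aeval_X, aeval_C,
        ← Algebra.smul_def]
      simp

lemma dMat_row {V : Type u} [Fintype V] [DecidableEq V] (G : SimpleGraph V) [DecidableRel G.Adj]
    (k : ℕ) (hreg : G.IsRegularOfDegree k) (hconn : G.Connected) (r : ℕ)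
    (hr : 2 * (r + 1) < G.girth) :
    (dMat G (r+1)).mulVec (fun _ => (1:ℝ)) = fun _ => (k:ℝ) * ((k:ℝ)-1)^r := by
  have hA : ∀ c : ℝ, (G.adjMatrix ℝ).mulVec (fun _ => c) = fun _ => k * c := by
    intro c
    ext v
    rw [adjMatrix_mulVec_apply, Finset.sum_const, card_neighborFinset_eq_degree, hreg v]
    simp
  induction r using Nat.strong_induction_on with
  | _ r ih =>
    match r with
    | 0 => rw [dMat_one, hA]; simp
    | 1 =>
      rw [dMat_rec G k hreg hconn 0 hr, Matrix.sub_mulVec, ← Matrix.mulVec_mulVec,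
        ih 0 (by omega) (by omega), hA, dMat_zero G hconn, Matrix.smul_mulVec, Matrix.one_mulVec]
      ext v
      simp; ring
    | (n+2) =>
      rw [dMat_rec G k hreg hconn (n+1) hr, Matrix.sub_mulVec, ← Matrix.mulVec_mulVec,
        ih (n+1) (by omega) (by omega), hA, Matrix.smul_mulVec, ih n (by omega) (by omega)]
      ext v
      simp; ring

lemma quad_lower {V : Type u} [Fintype V] [DecidableEq V] (G : SimpleGraph V) [DecidableRel G.Adj]
    (k : ℕ) (hreg : G.IsRegularOfDegree k) (hconn : G.Connected) (h : ℕ) (hk : 2 ≤ k)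
    (hr : 2 * (2*h+2) < G.girth) (f : V → ℝ) :
    -(((k:ℝ)-1)^h * k * (2*h+3)) * (f ⬝ᵥ f) ≤ f ⬝ᵥ (dMat G (2*h+2)).mulVec f := by
  let Q : ℝ[X] →ₗ[ℝ] ℝ :=
    { toFun := fun p => f ⬝ᵥ (aeval (G.adjMatrix ℝ) p).mulVec f
      map_add' := by intro p q; simp [Matrix.add_mulVec]
      map_smul' := by intro c p; simp [Matrix.smul_mulVec] }
  have hsymm : ∀ p : ℝ[X], (aeval (G.adjMatrix ℝ) p).transpose = aeval (G.adjMatrix ℝ) p := by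
    intro p
    induction p using Polynomial.induction_on' with
    | add p q hp hq => rw [map_add, Matrix.transpose_add, hp, hq]
    | monomial n a =>
      rw [aeval_monomial, ← Algebra.smul_def, Matrix.transpose_smul, Matrix.transpose_pow,
        transpose_adjMatrix]
  have hQ : ∀ p, 0 ≤ Q (p^2) := by
    intro p
    show 0 ≤ f ⬝ᵥ (aeval (G.adjMatrix ℝ) (p^2)).mulVec f
    rw [sq, map_mul, ← Matrix.mulVec_mulVec, Matrix.dotProduct_mulVec, ← Matrix.mulVec_transpose,
      hsymm]
    exact Finset.sum_nonneg fun i _ => mul_self_nonneg _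
  have hk' : (2:ℝ) ≤ k := by exact_mod_cast hk
  have := gP_lower ((k:ℝ)-1) (by linarith) Q hQ h
  have e1 : Q 1 = f ⬝ᵥ f := by
    show f ⬝ᵥ (aeval (G.adjMatrix ℝ) (1 : ℝ[X])).mulVec f = _
    simp
  have e2 : Q (gP ((k:ℝ)-1) (2*h+2)) = f ⬝ᵥ (dMat G (2*h+2)).mulVec f := by
    rw [dMat_eq G k hreg hconn _ hr]; rfl
  rw [e1, e2] at this
  simpa using this

/-- **Self-mixing estimate for distance-`m` graphs of large-girth regular graphs
(Bartal–Linial–Mendel–Naor).** Let `G` be a finite connected `k`-regular simple graph on `n`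
vertices with girth `g`, let `m` be an even integer with `0 < m < g/2`, and let `S ⊆ V` be
nonempty. Writing `2 E_{G^{(m)}}(S)` for the number of ordered pairs `(u,v) ∈ S × S` with
`d_G(u,v) = m`, one has
`2 E_{G^{(m)}}(S)/|S| ≥ (|S|/n)·k(k-1)^{m-1} - (k-1)^{m/2-1} k(m+1)`; in particular, if
`|S|/n ≥ (2m+2)/(k-1)^{m/2}` then `2 E_{G^{(m)}}(S)/|S| ≥ k(k-1)^{m-1}|S|/(2n)`. -/
theorem self_mixing_distance_m_graph (V : Type u) [Fintype V] [DecidableEq V]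
    (G : SimpleGraph V) [DecidableRel G.Adj] (k : ℕ) (hreg : G.IsRegularOfDegree k)
    (hconn : G.Connected) (g : ℕ) (hg : G.girth = (g : ℕ∞))
    (m : ℕ) (hm_even : Even m) (hm_pos : 0 < m) (hm_lt : 2 * m < g)
    (S : Finset V) (hS : S.Nonempty) :
    ((S.card : ℝ) / (Fintype.card V : ℝ)) * ((k : ℝ) * ((k : ℝ) - 1) ^ (m - 1)) -
        ((k : ℝ) - 1) ^ (m / 2 - 1) * ((k : ℝ) * ((m : ℝ) + 1)) ≤
      (Set.ncard {p : V × V | p.1 ∈ S ∧ p.2 ∈ S ∧ G.dist p.1 p.2 = m} : ℝ) / (S.card : ℝ) ∧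
    ((2 * (m : ℝ) + 2) / ((k : ℝ) - 1) ^ (m / 2) ≤ (S.card : ℝ) / (Fintype.card V : ℝ) →
      (k : ℝ) * ((k : ℝ) - 1) ^ (m - 1) * (S.card : ℝ) / (2 * (Fintype.card V : ℝ)) ≤
        (Set.ncard {p : V × V | p.1 ∈ S ∧ p.2 ∈ S ∧ G.dist p.1 p.2 = m} : ℝ) / (S.card : ℝ)) := by
  have hg' : G.girth = g := by exact_mod_cast hg
  have hk : 2 ≤ k := two_le_deg G k hreg (by omega)
  have hk' : (2:ℝ) ≤ k := by exact_mod_cast hk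
  obtain ⟨h, rfl⟩ : ∃ h, m = 2*h+2 := by
    obtain ⟨a, rfl⟩ := hm_even
    exact ⟨a - 1, by omega⟩
  have i1 : (2*h+2)/2 = h+1 := by omega
  rw [i1, show 2*h+2-1 = 2*h+1 by omega, show h+1-1 = h by omega]
  set N : ℝ := (Set.ncard {p : V × V | p.1 ∈ S ∧ p.2 ∈ S ∧ G.dist p.1 p.2 = 2*h+2} : ℝ) with hN
  set n : ℝ := (Fintype.card V : ℝ) with hn
  set s : ℝ := (S.card : ℝ) with hs
  have hs0 : 0 < s := by rw [hs]; exact_mod_cast hS.card_pos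
  have hn0 : 0 < n := by
    rw [hn]; exact_mod_cast Fintype.card_pos_iff.2 ⟨hS.choose⟩
  set q : ℝ := (k:ℝ) - 1 with hq
  have hq1 : 1 ≤ q := by rw [hq]; linarith
  let D := dMat G (2*h+2)
  let o : V → ℝ := fun _ => 1
  let f : V → ℝ := fun v => if v ∈ S then 1 else 0
  have hDo : D.mulVec o = (k * q^(2*h+1)) • o := by
    rw [show D.mulVec o = _ from dMat_row G k hreg hconn (2*h+1) (by omega)]
    ext v; simp [o, hq]
  have hDT : D.transpose = D := by
    ext u v; simp [D, dMat, G.dist_comm]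
  have hof : o ⬝ᵥ f = s := by simp [o, f, dotProduct, hs]
  have hfo : f ⬝ᵥ o = s := by rw [dotProduct_comm, hof]
  have hff : f ⬝ᵥ f = s := by simp [f, dotProduct, hs]
  have hoo : o ⬝ᵥ o = n := by simp [o, dotProduct, hn]
  have hfDf : f ⬝ᵥ D.mulVec f = N := by
    have e : {p : V × V | p.1 ∈ S ∧ p.2 ∈ S ∧ G.dist p.1 p.2 = 2*h+2} =
      ↑((S ×ˢ S).filter (fun p : V × V => G.dist p.1 p.2 = 2*h+2)) := by
      ext p; simp [and_assoc]
    rw [hN, e, Set.ncard_coe_finset, Finset.card_filter, Nat.cast_sum, Finset.sum_product]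
    simp [f, D, dMat, dotProduct, Matrix.mulVec]
  have hoDf : o ⬝ᵥ D.mulVec f = k * q^(2*h+1) * s := by
    rw [Matrix.dotProduct_mulVec, ← Matrix.mulVec_transpose, hDT, hDo, smul_dotProduct, hof]
    simp
  have key := quad_lower G k hreg hconn h hk (by omega) (f - (s/n) • o)
  change _ ≤ _ ⬝ᵥ D.mulVec _ at key
  rw [Matrix.mulVec_sub, Matrix.mulVec_smul, hDo] at key
  simp only [sub_dotProduct, dotProduct_sub, smul_dotProduct, dotProduct_smul, hfDf, hoDf, hfo,
    hof, hff, hoo, smul_eq_mul] at key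
  rw [← hq] at key
  have hc : 0 ≤ q^h * k * (2*h+3) := by positivity
  have e1 : s - s/n * s - (s/n * s - s/n * (s/n * n)) = s - s/n*s := by field_simp; ring
  have main : s/n * (k * q^(2*h+1)) * s - q^h * (k * (2*h+3)) * s ≤ N := by
    have e2 : N - s/n * (k * q^(2*h+1) * s) - (s/n * (k * q^(2*h+1) * s) -
      s/n * (s/n * (k * q^(2*h+1) * n))) = N - s/n * (k * q^(2*h+1)) * s := by field_simp; ring
    have e3 : 0 ≤ (q^h * k * (2*h+3)) * (s/n*s) := by positivity
    have key' : -(q^h * k * (2*h+3)) * (s - s/n*s) ≤ N - s/n * (k * q^(2*h+1)) * s := by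
      rw [← e1, ← e2]
      refine le_trans (le_of_eq ?_) (key.trans (le_of_eq ?_))
      · ring
      · ring
    nlinarith
  have first : s/n * (k * q^(2*h+1)) - q^h * (k * (2*h+3)) ≤ N / s := by
    rw [le_div_iff₀ hs0]; linarith
  have ec : ((2*h+2 : ℕ) : ℝ) + 1 = 2*h+3 := by push_cast; ring
  refine ⟨by rw [ec]; exact first, fun hyp => ?_⟩
  refine le_trans ?_ first
  have hqp : 0 < q^(h+1) := by positivity
  rw [div_le_iff₀ hqp, show 2 * ((2*h+2 : ℕ) : ℝ) + 2 = 2 * (2*h+3) by push_cast; ring] at hyp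
  have h5 := mul_le_mul_of_nonneg_right hyp (show 0 ≤ k * q^h by positivity)
  have e5 : s/n * q^(h+1) * (k * q^h) = s/n * (k * q^(2*h+1)) := by ring
  rw [e5] at h5
  have e6 : k * q^(2*h+1) * s / (2*n) = s/n * (k * q^(2*h+1)) / 2 := by field_simp
  rw [e6]
  nlinarith
end

section
/- Let (M, d_M) be a finite ultrametric space. Then there exists a map f from M into a real Hilbert space H such that ‖f(x) − f(y)‖_H = d_M(x,y) for all x,y ∈ M and ‖f(x)‖_H = diam(M)/√2 for all x ∈ M, where diam(M) = max_{x,y∈M} d_M(x,y); i.e., M embeds isometrically into the sphere of radius diam(M)/√2 of a Hilbert space (one may take H = ℓ_2). -/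
universe u

lemma aux_equiv_psd {M : Type u} [Fintype M] (s : M → M → Prop) (hs : Equivalence s)
    (c : M → ℝ) : 0 ≤ ∑ x, ∑ y, c x * c y * (open Classical in if s x y then (1:ℝ) else 0) := by
  classical
  let S : Setoid M := ⟨s, hs⟩
  have key : ∀ x y, s x y ↔ (Quotient.mk S x) = Quotient.mk S y := fun x y =>
    (Quotient.eq (r := S)).symm
  have h : ∑ x, ∑ y, c x * c y * (if s x y then (1:ℝ) else 0)
      = ∑ q : Quotient S, (∑ x, if Quotient.mk S x = q then c x else 0) ^ 2 := by
    simp_rw [sq, Finset.sum_mul_sum]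
    rw [Finset.sum_comm]
    conv_rhs => rw [Finset.sum_comm]
    rw [Finset.sum_comm]
    refine Finset.sum_congr rfl fun x _ => ?_
    conv_rhs => rw [Finset.sum_comm]
    refine Finset.sum_congr rfl fun y _ => ?_
    simp only [key, ite_mul, zero_mul, Finset.sum_ite_eq, Finset.mem_univ, if_true]
    by_cases hxy : Quotient.mk S x = Quotient.mk S y
    · simp [hxy]
    · simp [hxy, Ne.symm hxy]
  have : 0 ≤ ∑ x, ∑ y, c x * c y * (if s x y then (1:ℝ) else 0) := by
    rw [h]; positivity
  convert this

lemma aux_int (a D : ℝ) (ha : 0 ≤ a) (hD : a ≤ D) :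
    IntervalIntegrable (fun t => if a ≤ t then (1:ℝ) else 0) MeasureTheory.volume 0 D ∧
    ∫ t in (0:ℝ)..D, (if a ≤ t then (1:ℝ) else 0) = D - a := by
  have hm : Monotone (fun t => if a ≤ t then (1:ℝ) else 0) := by
    intro s t hst
    dsimp only
    split_ifs <;> first | linarith | norm_num
  have hi : ∀ p q, IntervalIntegrable (fun t => if a ≤ t then (1:ℝ) else 0)
    MeasureTheory.volume p q := fun p q => hm.intervalIntegrable
  refine ⟨hi _ _, ?_⟩
  rw [← intervalIntegral.integral_add_adjacent_intervals (hi 0 a) (hi a D)]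
  have h1 : ∫ t in (0:ℝ)..a, (if a ≤ t then (1:ℝ) else 0) = ∫ t in (0:ℝ)..a, (0:ℝ) := by
    rw [intervalIntegral.integral_of_le ha, intervalIntegral.integral_of_le ha,
      MeasureTheory.integral_Ioc_eq_integral_Ioo, MeasureTheory.integral_Ioc_eq_integral_Ioo]
    refine MeasureTheory.setIntegral_congr_fun measurableSet_Ioo fun t ht => ?_
    simp [ht.2]
  have h2 : ∫ t in a..D, (if a ≤ t then (1:ℝ) else 0) = ∫ t in a..D, (1:ℝ) := by
    refine intervalIntegral.integral_congr fun t ht => ?_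
    rw [Set.uIcc_of_le hD] at ht
    simp [ht.1]
  rw [h1, h2]; simp

lemma aux_psd {M : Type u} [MetricSpace M] [Fintype M]
    (hult : ∀ x y z : M, dist x z ≤ max (dist x y) (dist y z)) (D : ℝ)
    (hD : ∀ x y : M, dist x y ≤ D) (hD0 : 0 ≤ D) (c : M → ℝ) :
    0 ≤ ∑ x, ∑ y, c x * c y * (D ^ 2 - dist x y ^ 2) := by
  have hi := fun x y : M => aux_int (dist x y ^ 2) (D ^ 2) (by positivity)
    (by have := hD x y; gcongr)
  have h : ∑ x, ∑ y, c x * c y * (D ^ 2 - dist x y ^ 2) =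
      ∫ t in (0:ℝ)..D ^ 2, ∑ x, ∑ y, c x * c y * (if dist x y ^ 2 ≤ t then (1:ℝ) else 0) := by
    rw [intervalIntegral.integral_finsetSum]
    · refine Finset.sum_congr rfl fun x _ => ?_
      rw [intervalIntegral.integral_finsetSum]
      · refine Finset.sum_congr rfl fun y _ => ?_
        rw [intervalIntegral.integral_const_mul, (hi x y).2]
      · intro y _
        exact (hi x y).1.const_mul _
    · intro x _
      have := IntervalIntegrable.sum (μ := MeasureTheory.volume) (a := 0) (b := D ^ 2) Finset.univ
        (f := fun y t => c x * c y * (if dist x y ^ 2 ≤ t then (1:ℝ) else 0))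
        (fun y _ => (hi x y).1.const_mul _)
      have e : (fun t => ∑ y, c x * c y * (if dist x y ^ 2 ≤ t then (1:ℝ) else 0)) =
          ∑ y, fun t => c x * c y * (if dist x y ^ 2 ≤ t then (1:ℝ) else 0) := by
        ext t; simp only [Finset.sum_apply]
      rw [e]; exact this
  rw [h]
  refine intervalIntegral.integral_nonneg (by positivity) fun t ht => ?_
  have := aux_equiv_psd (fun x y : M => dist x y ^ 2 ≤ t)
    ⟨fun x => by simpa using ht.1, fun {x y} h => by rwa [dist_comm], fun {x y z} h1 h2 => by
      rcases le_max_iff.1 (hult x y z) with h | h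
      · exact le_trans (by gcongr) h1
      · exact le_trans (by gcongr) h2⟩ c
  convert this

theorem finite_ultrametric_isometric_sphere_embedding (M : Type u) [MetricSpace M] [Fintype M]
    (hult : ∀ x y z : M, dist x z ≤ max (dist x y) (dist y z)) :
    ∃ f : M → lp (fun _ : ℕ => ℝ) 2,
      (∀ x y : M, ‖f x - f y‖ = dist x y) ∧
      (∀ x : M, ‖f x‖ = Metric.diam (Set.univ : Set M) / Real.sqrt 2) := by
  classical
  set D := Metric.diam (Set.univ : Set M) with hDdef
  have hD0 : 0 ≤ D := Metric.diam_nonneg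
  have hD : ∀ x y : M, dist x y ≤ D := fun x y =>
    Metric.dist_le_diam_of_mem (Set.finite_univ.isBounded) (Set.mem_univ x) (Set.mem_univ y)
  let G : Matrix M M ℝ := Matrix.of fun x y => (D ^ 2 - dist x y ^ 2) / 2
  have hG : G.PosSemidef := by
    refine Matrix.PosSemidef.of_dotProduct_mulVec_nonneg ?_ fun c => ?_
    · ext x y; simp [G, dist_comm]
    · have := aux_psd hult D hD hD0 c
      have e : star c ⬝ᵥ G.mulVec c = (∑ x, ∑ y, c x * c y * (D ^ 2 - dist x y ^ 2)) / 2 := by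
        simp only [dotProduct, Matrix.mulVec, Finset.mul_sum, Finset.sum_div]
        refine Finset.sum_congr rfl fun x _ => Finset.sum_congr rfl fun y _ => ?_
        simp [G]; ring
      rw [e]; positivity
  obtain ⟨B, hB⟩ : ∃ B : Matrix M M ℝ, G = B.conjTranspose * B := by
    open scoped MatrixOrder in
    exact CStarAlgebra.nonneg_iff_eq_star_mul_self.1 hG.nonneg
  let e : M → ℕ := fun x => (Fintype.equivFin M x : ℕ)
  have he : Function.Injective e := fun x y h =>
    (Fintype.equivFin M).injective (Fin.ext h)
  let f : M → lp (fun _ : ℕ => ℝ) 2 := fun x => ∑ i, lp.single 2 (e i) (B i x)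
  have hf : ∀ x y, inner ℝ (f x) (f y) = (D ^ 2 - dist x y ^ 2) / 2 := by
    intro x y
    have h1 : (D ^ 2 - dist x y ^ 2) / 2 = ∑ i, B i x * B i y := by
      have := congrFun (congrFun hB x) y
      simpa [G, Matrix.mul_apply] using this
    rw [h1]
    simp only [f, sum_inner, inner_sum, lp.inner_single_left, lp.single_apply]
    refine Finset.sum_congr rfl fun i _ => ?_
    rw [Finset.sum_eq_single i]
    · simp [mul_comm]
    · intro j _ hj
      simp [Pi.single_apply, he.ne hj, he.ne hj.symm]
    · simp
  refine ⟨f, fun x y => ?_, fun x => ?_⟩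
  · rw [← sq_eq_sq₀ (norm_nonneg _) dist_nonneg, @norm_sub_sq_real, hf,
      ← real_inner_self_eq_norm_sq, ← real_inner_self_eq_norm_sq, hf, hf]
    simp; ring
  · rw [← sq_eq_sq₀ (norm_nonneg _) (by positivity), ← real_inner_self_eq_norm_sq, hf, div_pow]
    simp
end
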